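/- arXiv:2003.11416 — 6 statements merged into one kernel-verified Lean document; each statement's English description precedes it below -/
import Mathlib

section
/- In the valuation setting below, let δ = δ_α be a threshold coloring for some α ∈ ℤ. Suppose H = (v₁, v₂, v₃, v₄) is a 4-cycle of G whose four edges v₁v₂, v₂v₃, v₃v₄, v₄v₁ are all blue under δ, and suppose there exist a path in G from v₁ to v₃ and a path in G from v₂ to v₄ all of whose edges are red under δ. Then λ(v₁v₂)² + λ(v₃v₄)² = λ(v₂v₃)² + λ(v₁v₄)². -/
noncomputable section

/-- `W_{u,v} = (x_v − x_u) + i(y_v − y_u)`, computed in a field `F` containing `ℂ`. -/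
def Wmap {V F : Type*} [Field F] (ι : ℂ →+* F) (x y : V → F) (u v : V) : F :=
  (x v - x u) + ι Complex.I * (y v - y u)

/-- The difference vector along a red walk is zero or has valuation above the threshold. -/
theorem red_walk_aux {V F : Type*} [Field F] (G : SimpleGraph V)
    (ι : ℂ →+* F) (x y : V → F) (ν : F → ℤ) (α : ℤ)
    (hν_add : ∀ a b : F, a ≠ 0 → b ≠ 0 → a + b ≠ 0 → min (ν a) (ν b) ≤ ν (a + b))
    {u v : V} (P : G.Walk u v)
    (hP : ∀ e ∈ P.edges, ∀ a b : V, e = s(a, b) → α < ν (Wmap ι x y a b)) :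
    Wmap ι x y u v = 0 ∨ α < ν (Wmap ι x y u v) := by
  induction P with
  | nil => left; simp [Wmap]
  | @cons u w v h p ih =>
    have h1 : α < ν (Wmap ι x y u w) := hP s(u, w) (by simp) u w rfl
    have h2 := ih (fun e he => hP e (by simp [he]))
    have h3 : Wmap ι x y u v = Wmap ι x y u w + Wmap ι x y w v := by
      simp only [Wmap]; ring
    by_cases hz : Wmap ι x y u v = 0
    · exact Or.inl hz
    right
    rcases h2 with h2 | h2
    · rw [h3, h2, add_zero]; exact h1
    by_cases ha : Wmap ι x y u w = 0
    · rw [h3, ha, zero_add]; exact h2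
    by_cases hb : Wmap ι x y w v = 0
    · rw [h3, hb, add_zero]; exact h1
    have := hν_add _ _ ha hb (h3 ▸ hz)
    rw [← h3] at this
    exact lt_of_lt_of_le (lt_min h1 h2) this

/-- Proposition on 4-cycles with blue edges and red connecting paths: in the valuation
setting, if the 4-cycle `(v₁,v₂,v₃,v₄)` is blue under the threshold coloring `δ_α` and
there are red paths `v₁–v₃` and `v₂–v₄`, then
`λ(v₁v₂)² + λ(v₃v₄)² = λ(v₂v₃)² + λ(v₁v₄)²`. -/
theorem blue_cycle_red_paths_orthogonal_diagonals
    {V F : Type*} [Fintype V] [Field F] (G : SimpleGraph V) (lam : Sym2 V → ℝ)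
    (ι : ℂ →+* F) (x y : V → F) (ν : F → ℤ) (α : ℤ)
    (hpos : ∀ e ∈ G.edgeSet, 0 < lam e)
    (hedge : ∀ ⦃u v : V⦄, G.Adj u v →
      (x u - x v) ^ 2 + (y u - y v) ^ 2 = (ι ((lam s(u, v) : ℝ) : ℂ)) ^ 2)
    (hν_mul : ∀ a b : F, a ≠ 0 → b ≠ 0 → ν (a * b) = ν a + ν b)
    (hν_add : ∀ a b : F, a ≠ 0 → b ≠ 0 → a + b ≠ 0 → min (ν a) (ν b) ≤ ν (a + b))
    (hν_triv : ∀ c : ℂ, c ≠ 0 → ν (ι c) = 0)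
    (v₁ v₂ v₃ v₄ : V)
    (h12 : G.Adj v₁ v₂) (h23 : G.Adj v₂ v₃) (h34 : G.Adj v₃ v₄) (h41 : G.Adj v₄ v₁)
    (h13 : v₁ ≠ v₃) (h24 : v₂ ≠ v₄)
    (hb12 : ν (Wmap ι x y v₁ v₂) ≤ α) (hb23 : ν (Wmap ι x y v₂ v₃) ≤ α)
    (hb34 : ν (Wmap ι x y v₃ v₄) ≤ α) (hb41 : ν (Wmap ι x y v₄ v₁) ≤ α)
    (hP1 : ∃ P : G.Walk v₁ v₃, ∀ e ∈ P.edges, ∀ a b : V, e = s(a, b) →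
      α < ν (Wmap ι x y a b))
    (hP2 : ∃ P : G.Walk v₂ v₄, ∀ e ∈ P.edges, ∀ a b : V, e = s(a, b) →
      α < ν (Wmap ι x y a b)) :
    lam s(v₁, v₂) ^ 2 + lam s(v₃, v₄) ^ 2 = lam s(v₂, v₃) ^ 2 + lam s(v₁, v₄) ^ 2 := by
  obtain ⟨P1, hP1⟩ := hP1
  obtain ⟨P2, hP2⟩ := hP2
  have hp := red_walk_aux G ι x y ν α hν_add P1 hP1
  have hq := red_walk_aux G ι x y ν α hν_add P2 hP2
  have hI : ι Complex.I * ι Complex.I = -1 := by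
    rw [← map_mul, Complex.I_mul_I, map_neg, map_one]
  -- factorization of every edge equation
  have hfac : ∀ u v, G.Adj u v → Wmap ι x y u v * ((x v - x u) - ι Complex.I * (y v - y u))
      = (ι ((lam s(u, v) : ℝ) : ℂ)) ^ 2 := by
    intro u v h
    rw [← hedge h]; simp only [Wmap]
    linear_combination (-(y v - y u) ^ 2) * hI
  have hne : ∀ u v, G.Adj u v → Wmap ι x y u v ≠ 0 := by
    intro u v h h0
    have h1 := hfac u v h
    rw [h0, zero_mul] at h1
    have h2 : ι ((lam s(u, v) : ℝ) : ℂ) = 0 := pow_eq_zero_iff (two_ne_zero) |>.1 h1.symm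
    rw [map_eq_zero] at h2
    have h3 : lam s(u, v) = 0 := by exact_mod_cast h2
    exact (hpos s(u, v) h).ne' h3
  have hν1 : ν 1 = 0 := by
    have := hν_triv 1 one_ne_zero
    rwa [map_one] at this
  have hνn1 : ν (-1) = 0 := by
    have := hν_triv (-1) (by simp)
    rwa [map_neg, map_one] at this
  -- the valuation ring
  let O : Subring F :=
    { carrier := {t | t = 0 ∨ 0 ≤ ν t}
      zero_mem' := Or.inl rfl
      one_mem' := Or.inr hν1.ge
      mul_mem' := by
        intro a b ha hb
        by_cases h1 : a = 0
        · left; simp [h1]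
        by_cases h2 : b = 0
        · left; simp [h2]
        right
        rw [hν_mul a b h1 h2]
        exact add_nonneg (ha.resolve_left h1) (hb.resolve_left h2)
      add_mem' := by
        intro a b ha hb
        by_cases h1 : a = 0
        · simpa [h1] using hb
        by_cases h2 : b = 0
        · simpa [h2] using ha
        by_cases h3 : a + b = 0
        · exact Or.inl h3
        right
        exact (le_min (ha.resolve_left h1) (hb.resolve_left h2)).trans (hν_add a b h1 h2 h3)
      neg_mem' := by
        intro a ha
        by_cases h1 : a = 0
        · left; simp [h1]
        right
        have := hν_mul (-1) a (by simp) h1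
        rw [neg_one_mul, hνn1, zero_add] at this
        rw [this]; exact ha.resolve_left h1 }
  have hO : ∀ t, t ∈ O ↔ t = 0 ∨ 0 ≤ ν t := fun t => Iff.rfl
  have hC : ∀ c : ℂ, ι c ∈ O := by
    intro c
    by_cases h : c = 0
    · left; simp [h]
    · right; exact (hν_triv c h).ge
  -- elements of positive valuation
  have hM_mul : ∀ t s : F, (t = 0 ∨ 0 < ν t) → s ∈ O → (t * s = 0 ∨ 0 < ν (t * s)) := by
    intro t s ht hs
    by_cases h1 : t = 0
    · left; simp [h1]
    by_cases h2 : s = 0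
    · left; simp [h2]
    right
    rw [hν_mul t s h1 h2]
    exact add_pos_of_pos_of_nonneg (ht.resolve_left h1) (hs.resolve_left h2)
  have hM_add : ∀ t s : F, (t = 0 ∨ 0 < ν t) → (s = 0 ∨ 0 < ν s) →
      (t + s = 0 ∨ 0 < ν (t + s)) := by
    intro a b ha hb
    by_cases h1 : a = 0
    · simpa [h1] using hb
    by_cases h2 : b = 0
    · simpa [h2] using ha
    by_cases h3 : a + b = 0
    · exact Or.inl h3
    right
    exact (lt_min (ha.resolve_left h1) (hb.resolve_left h2)).trans_le (hν_add a b h1 h2 h3)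
  have hw0 := hne _ _ h23
  have hinv : ν (Wmap ι x y v₂ v₃)⁻¹ = - ν (Wmap ι x y v₂ v₃) := by
    have := hν_mul _ _ hw0 (inv_ne_zero hw0)
    rw [mul_inv_cancel₀ hw0, hν1] at this
    omega
  have hdiv : ∀ t : F, (t = 0 ∨ α < ν t) →
      (t * (Wmap ι x y v₂ v₃)⁻¹ = 0 ∨ 0 < ν (t * (Wmap ι x y v₂ v₃)⁻¹)) := by
    intro t ht
    by_cases h1 : t = 0
    · left; simp [h1]
    right
    rw [hν_mul _ _ h1 (inv_ne_zero hw0), hinv]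
    have := ht.resolve_left h1
    omega
  have hPM := hdiv _ hp
  have hQM := hdiv _ hq
  obtain ⟨P, hPdef⟩ : ∃ P, P = Wmap ι x y v₁ v₃ * (Wmap ι x y v₂ v₃)⁻¹ := ⟨_, rfl⟩
  obtain ⟨Q, hQdef⟩ : ∃ Q, Q = Wmap ι x y v₂ v₄ * (Wmap ι x y v₂ v₃)⁻¹ := ⟨_, rfl⟩
  rw [← hPdef] at hPM
  rw [← hQdef] at hQM
  have hPO : P ∈ O := hPM.imp id le_of_lt
  have hQO : Q ∈ O := hQM.imp id le_of_lt
  have hPw : Wmap ι x y v₁ v₃ = P * Wmap ι x y v₂ v₃ := by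
    rw [hPdef, inv_mul_cancel_right₀ hw0]
  have hQw : Wmap ι x y v₂ v₄ = Q * Wmap ι x y v₂ v₃ := by
    rw [hQdef, inv_mul_cancel_right₀ hw0]
  have f12 := hfac _ _ h12
  have f23 := hfac _ _ h23
  have f34 := hfac _ _ h34
  have f41 := hfac _ _ h41
  have e12 : Wmap ι x y v₁ v₂ = (P - 1) * Wmap ι x y v₂ v₃ := by
    rw [sub_mul, ← hPw]; simp only [Wmap]; ring
  have e34 : Wmap ι x y v₃ v₄ = (Q - 1) * Wmap ι x y v₂ v₃ := by
    rw [sub_mul, ← hQw]; simp only [Wmap]; ring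
  have e41 : Wmap ι x y v₄ v₁ = (1 - P - Q) * Wmap ι x y v₂ v₃ := by
    rw [sub_mul, sub_mul, ← hQw, ← hPw]; simp only [Wmap]; ring
  rw [e12] at f12
  rw [e34] at f34
  rw [e41] at f41
  generalize Wmap ι x y v₂ v₃ = w at *
  rw [← map_pow] at f12 f23 f34 f41
  obtain ⟨a, ha⟩ : ∃ a : ℂ, a = ((lam s(v₁, v₂) : ℝ) : ℂ) ^ 2 := ⟨_, rfl⟩
  obtain ⟨b, hb⟩ : ∃ a : ℂ, a = ((lam s(v₂, v₃) : ℝ) : ℂ) ^ 2 := ⟨_, rfl⟩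
  obtain ⟨c, hc⟩ : ∃ a : ℂ, a = ((lam s(v₃, v₄) : ℝ) : ℂ) ^ 2 := ⟨_, rfl⟩
  obtain ⟨d, hd⟩ : ∃ a : ℂ, a = ((lam s(v₄, v₁) : ℝ) : ℂ) ^ 2 := ⟨_, rfl⟩
  rw [← ha] at f12
  rw [← hb] at f23
  rw [← hc] at f34
  rw [← hd] at f41
  have key : ι (b - a - c + d) =
      P * (ι b * (1 + (1 - Q) * (1 - P - Q)) - ι a * (1 - Q) - ι c * (1 + 1 - P)
        + ι d * (1 - Q))
      + Q * (ι b * (1 + 1 - P - Q) - ι a * (1 + 1 - Q) - ι c * (1 - P) + ι d) := by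
    simp only [map_add, map_sub]
    rw [← f12, ← f23, ← f34, ← f41]
    ring
  have o1 := O.one_mem
  have oa := hC a
  have ob := hC b
  have oc := hC c
  have od := hC d
  have hmem := hM_add _ _
    (hM_mul P (ι b * (1 + (1 - Q) * (1 - P - Q)) - ι a * (1 - Q) - ι c * (1 + 1 - P)
        + ι d * (1 - Q)) hPM (by
      repeat first | assumption | apply O.add_mem | apply O.sub_mem | apply O.mul_mem))
    (hM_mul Q (ι b * (1 + 1 - P - Q) - ι a * (1 + 1 - Q) - ι c * (1 - P) + ι d) hQM (by
      repeat first | assumption | apply O.add_mem | apply O.sub_mem | apply O.mul_mem))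
  rw [← key] at hmem
  have hz : b - a - c + d = 0 := by
    by_contra hne0
    rcases hmem with h | h
    · exact hne0 ((map_eq_zero ι).1 h)
    · rw [hν_triv _ hne0] at h
      exact lt_irrefl _ h
  rw [ha, hb, hc, hd] at hz
  have hzr : lam s(v₂, v₃) ^ 2 - lam s(v₁, v₂) ^ 2 - lam s(v₃, v₄) ^ 2
      + lam s(v₄, v₁) ^ 2 = 0 := by exact_mod_cast hz
  rw [Sym2.eq_swap (a := v₁) (b := v₄)]
  linarith
end
end

section
/- In the valuation setting below, let δ = δ_α be a threshold coloring for some α ∈ ℤ. Suppose G contains a 3-cycle (u₁, u₂, u₃) and a 4-cycle (v₁, v₂, v₃, v₄) whose seven edges u₁u₂, u₂u₃, u₁u₃, v₁v₂, v₂v₃, v₃v₄, v₁v₄ are all blue under δ; suppose u₁ and v₁ are equal or joined by a path all of whose edges are red, u₃ and v₃ are joined by a path all of whose edges are red, and u₂, v₂ and v₄ all lie in one connected subgraph of G all of whose edges are red. Assume moreover the triangle inequalities λ(u₁u₂) ≤ λ(u₁u₃) + λ(u₂u₃), λ(u₁u₃) ≤ λ(u₁u₂) + λ(u₂u₃), λ(u₂u₃)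 ≤ λ(u₁u₂) + λ(u₁u₃). Then either one of these three inequalities is an equality (the triangle is degenerate), or λ(v₁v₂) = λ(v₁v₄) and λ(v₂v₃) = λ(v₃v₄). -/
noncomputable section

/-- `f` is zero or has valuation greater than `b`. -/
def GtV {F : Type*} [Field F] (ν : F → ℤ) (b : ℤ) (f : F) : Prop := f = 0 ∨ b < ν f

theorem GtV.add {F : Type*} [Field F] {ν : F → ℤ} {b : ℤ}
    (hν_add : ∀ a b : F, a ≠ 0 → b ≠ 0 → a + b ≠ 0 → min (ν a) (ν b) ≤ ν (a + b))
    {f g : F} (hf : GtV ν b f) (hg : GtV ν b g) : GtV ν b (f + g) := by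
  by_cases h1 : f = 0
  · simpa [h1] using hg
  by_cases h2 : g = 0
  · simpa [h2] using hf
  by_cases h3 : f + g = 0
  · exact Or.inl h3
  have h := hν_add f g h1 h2 h3
  have hf' := hf.resolve_left h1
  have hg' := hg.resolve_left h2
  exact Or.inr (lt_of_lt_of_le (lt_min hf' hg') h)

theorem GtV.mul {F : Type*} [Field F] {ν : F → ℤ} {b c d : ℤ}
    (hν_mul : ∀ a b : F, a ≠ 0 → b ≠ 0 → ν (a * b) = ν a + ν b)
    {f g : F} (hf : GtV ν b f) (hg : GtV ν c g) (h : d ≤ b + c + 1) : GtV ν d (f * g) := by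
  by_cases h1 : f = 0
  · left; simp [h1]
  by_cases h2 : g = 0
  · left; simp [h2]
  have hf' := hf.resolve_left h1
  have hg' := hg.resolve_left h2
  right
  rw [hν_mul f g h1 h2]
  omega

theorem GtV.const {F : Type*} [Field F] {ν : F → ℤ} (ι : ℂ →+* F)
    (hν_triv : ∀ c : ℂ, c ≠ 0 → ν (ι c) = 0) (c : ℂ) : GtV ν (-1) (ι c) := by
  by_cases h : c = 0
  · left; simp [h]
  · right; rw [hν_triv c h]; norm_num

theorem GtV.neg {F : Type*} [Field F] {ν : F → ℤ} {b : ℤ} (ι : ℂ →+* F)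
    (hν_mul : ∀ a b : F, a ≠ 0 → b ≠ 0 → ν (a * b) = ν a + ν b)
    (hν_triv : ∀ c : ℂ, c ≠ 0 → ν (ι c) = 0)
    {f : F} (hf : GtV ν b f) : GtV ν b (-f) := by
  have h := GtV.mul (d := b) hν_mul (GtV.const ι hν_triv (-1)) hf (by omega)
  simpa using h

/-- `f` is congruent to the constant `c` modulo the maximal ideal. -/
def CongC {F : Type*} [Field F] (ν : F → ℤ) (ι : ℂ →+* F) (f : F) (c : ℂ) : Prop :=
  GtV ν 0 (f - ι c)

theorem CongC.const {F : Type*} [Field F] {ν : F → ℤ} (ι : ℂ →+* F) (c : ℂ) :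
    CongC ν ι (ι c) c := Or.inl (sub_self _)

theorem CongC.add {F : Type*} [Field F] {ν : F → ℤ} {ι : ℂ →+* F}
    (hν_add : ∀ a b : F, a ≠ 0 → b ≠ 0 → a + b ≠ 0 → min (ν a) (ν b) ≤ ν (a + b))
    {f g : F} {c d : ℂ} (hf : CongC ν ι f c) (hg : CongC ν ι g d) :
    CongC ν ι (f + g) (c + d) := by
  have h := GtV.add hν_add hf hg
  unfold CongC
  convert h using 1
  rw [map_add]; ring

theorem CongC.mul {F : Type*} [Field F] {ν : F → ℤ} {ι : ℂ →+* F}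
    (hν_mul : ∀ a b : F, a ≠ 0 → b ≠ 0 → ν (a * b) = ν a + ν b)
    (hν_add : ∀ a b : F, a ≠ 0 → b ≠ 0 → a + b ≠ 0 → min (ν a) (ν b) ≤ ν (a + b))
    (hν_triv : ∀ c : ℂ, c ≠ 0 → ν (ι c) = 0)
    {f g : F} {c d : ℂ} (hf : CongC ν ι f c) (hg : CongC ν ι g d) :
    CongC ν ι (f * g) (c * d) := by
  have h1 := GtV.mul (d := 0) hν_mul hf hg (by omega)
  have h2 := GtV.mul (d := 0) hν_mul (GtV.const ι hν_triv c) hg (by omega)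
  have h3 := GtV.mul (d := 0) hν_mul (GtV.const ι hν_triv d) hf (by omega)
  have h := GtV.add hν_add (GtV.add hν_add h1 h2) h3
  unfold CongC
  convert h using 1
  rw [map_mul]; ring

theorem CongC.uniq {F : Type*} [Field F] {ν : F → ℤ} {ι : ℂ →+* F}
    (hν_triv : ∀ c : ℂ, c ≠ 0 → ν (ι c) = 0)
    {c : ℂ} (hf : CongC ν ι 0 c) : c = 0 := by
  by_contra hc
  rcases hf with h | h
  · rw [zero_sub, neg_eq_zero, map_eq_zero] at h
    exact hc h
  · rw [zero_sub, ← map_neg, hν_triv _ (neg_ne_zero.mpr hc)] at h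
    exact lt_irrefl _ h

theorem red_walk {V F : Type*} [Field F] (G : SimpleGraph V)
    (ι : ℂ →+* F) (x y : V → F) (ν : F → ℤ) (α : ℤ)
    (hν_add : ∀ a b : F, a ≠ 0 → b ≠ 0 → a + b ≠ 0 → min (ν a) (ν b) ≤ ν (a + b))
    {u v : V} (P : G.Walk u v)
    (hP : ∀ e ∈ P.edges, ∀ a b : V, e = s(a, b) → α < ν (Wmap ι x y a b)) :
    GtV ν α (Wmap ι x y u v) := by
  induction P with
  | nil => left; simp [Wmap]
  | @cons a b c h p ih =>
    have h1 := ih (fun e he => hP e (by simp [he]))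
    have h2 : GtV ν α (Wmap ι x y a b) := Or.inr (hP s(a, b) (by simp) a b rfl)
    have h3 := GtV.add hν_add h2 h1
    convert h3 using 1
    simp only [Wmap]; ring

/-- The ratio in a triangle is a complex constant. -/
theorem tri_const {F : Type*} [Field F] (ι : ℂ →+* F) (P Q R : ℂ) (hR : R ≠ 0) (a : F)
    (h : ι P * (1 - a) + ι Q * a = ι R * (a * (1 - a))) :
    ∃ c : ℂ, a = ι c ∧ P * (1 - c) + Q * c = R * (c * (1 - c)) := by
  obtain ⟨s, hs⟩ := IsAlgClosed.exists_pow_nat_eq ((Q - P - R) ^ 2 - 4 * P * R)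
    (n := 2) (by norm_num)
  have hs' : (2 * ι R * a + (ι Q - ι P - ι R)) ^ 2 = (ι s) ^ 2 := by
    rw [← map_pow, hs]
    simp only [map_sub, map_mul, map_pow, map_ofNat]
    linear_combination (4 * ι R) * h
  have h2 : (2 : F) ≠ 0 := by
    have : ι 2 ≠ 0 := by rw [map_ne_zero]; norm_num
    rwa [map_ofNat] at this
  have hR' : ι R ≠ 0 := by rwa [map_ne_zero]
  have key : ∃ c : ℂ, a = ι c := by
    rcases sq_eq_sq_iff_eq_or_eq_neg.mp hs' with h3 | h3
    · refine ⟨(s - (Q - P - R)) / (2 * R), ?_⟩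
      simp only [map_sub, map_mul, map_div₀, map_ofNat]
      rw [eq_div_iff (mul_ne_zero h2 hR')]
      linear_combination h3
    · refine ⟨(-s - (Q - P - R)) / (2 * R), ?_⟩
      simp only [map_sub, map_mul, map_div₀, map_ofNat, map_neg]
      rw [eq_div_iff (mul_ne_zero h2 hR')]
      linear_combination h3
  obtain ⟨c, rfl⟩ := key
  refine ⟨c, rfl, ι.injective ?_⟩
  simpa using h

theorem tri_im {p q r : ℝ} (hp : 0 < p) (hq : 0 < q) (hr : 0 < r)
    (h1 : p < r + q) (h2 : r < p + q) (h3 : q < p + r) (c : ℂ)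
    (h : (p : ℂ) ^ 2 * (1 - c) + (q : ℂ) ^ 2 * c = (r : ℂ) ^ 2 * (c * (1 - c))) : c.im ≠ 0 := by
  intro hc
  obtain ⟨t, rfl⟩ : ∃ t : ℝ, c = (t : ℂ) := ⟨c.re, by apply Complex.ext <;> simp [hc]⟩
  have h' : p ^ 2 * (1 - t) + q ^ 2 * t = r ^ 2 * (t * (1 - t)) := by exact_mod_cast h
  have e : (2 * r ^ 2 * t + (q ^ 2 - p ^ 2 - r ^ 2)) ^ 2
      = -((p + r - q) * (p + r + q) * ((q + p - r) * (q + r - p))) := by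
    linear_combination (4 * r ^ 2) * h'
  have : 0 < (p + r - q) * (p + r + q) * ((q + p - r) * (q + r - p)) := by
    have a1 : 0 < p + r - q := by linarith
    have a2 : 0 < q + p - r := by linarith
    have a3 : 0 < q + r - p := by linarith
    positivity
  nlinarith [sq_nonneg (2 * r ^ 2 * t + (q ^ 2 - p ^ 2 - r ^ 2))]

theorem lin_indep {A B : ℝ} {c : ℂ} (hc : c.im ≠ 0)
    (h : (A : ℂ) * (1 - c) + B * c = 0) : A = 0 ∧ B = 0 := by
  have h1 := congrArg Complex.im h
  have h2 := congrArg Complex.re h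
  simp at h1 h2
  have e : A = B := by
    have : (B - A) * c.im = 0 := by linear_combination h1
    rcases mul_eq_zero.mp this with h | h
    · linarith
    · exact absurd h hc
  subst e
  have : A = 0 := by linear_combination h2
  exact ⟨this, this⟩

/-- In the valuation setting, given a blue 3-cycle `(u₁,u₂,u₃)` and a blue 4-cycle
`(v₁,v₂,v₃,v₄)` with `u₁∼v₁`, `u₃∼v₃` red-connected and `u₂, v₂, v₄` in one red
connected subgraph, either the triangle is degenerate or
`λ(v₁v₂)=λ(v₁v₄)` and `λ(v₂v₃)=λ(v₃v₄)`. -/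
theorem blue_triangle_blue_cycle_degenerate_or_deltoid
    {V F : Type*} [Fintype V] [Field F] (G : SimpleGraph V) (lam : Sym2 V → ℝ)
    (ι : ℂ →+* F) (x y : V → F) (ν : F → ℤ) (α : ℤ)
    (hpos : ∀ e ∈ G.edgeSet, 0 < lam e)
    (hedge : ∀ ⦃u v : V⦄, G.Adj u v →
      (x u - x v) ^ 2 + (y u - y v) ^ 2 = (ι ((lam s(u, v) : ℝ) : ℂ)) ^ 2)
    (hν_mul : ∀ a b : F, a ≠ 0 → b ≠ 0 → ν (a * b) = ν a + ν b)
    (hν_add : ∀ a b : F, a ≠ 0 → b ≠ 0 → a + b ≠ 0 → min (ν a) (ν b) ≤ ν (a + b))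
    (hν_triv : ∀ c : ℂ, c ≠ 0 → ν (ι c) = 0)
    (u₁ u₂ u₃ v₁ v₂ v₃ v₄ : V)
    (hu12 : G.Adj u₁ u₂) (hu23 : G.Adj u₂ u₃) (hu13 : G.Adj u₁ u₃)
    (hv12 : G.Adj v₁ v₂) (hv23 : G.Adj v₂ v₃) (hv34 : G.Adj v₃ v₄) (hv41 : G.Adj v₄ v₁)
    (hv13 : v₁ ≠ v₃) (hv24 : v₂ ≠ v₄)
    (hbu12 : ν (Wmap ι x y u₁ u₂) ≤ α) (hbu23 : ν (Wmap ι x y u₂ u₃) ≤ α)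
    (hbu13 : ν (Wmap ι x y u₁ u₃) ≤ α)
    (hbv12 : ν (Wmap ι x y v₁ v₂) ≤ α) (hbv23 : ν (Wmap ι x y v₂ v₃) ≤ α)
    (hbv34 : ν (Wmap ι x y v₃ v₄) ≤ α) (hbv41 : ν (Wmap ι x y v₄ v₁) ≤ α)
    (hP1 : ∃ P : G.Walk u₁ v₁, ∀ e ∈ P.edges, ∀ a b : V, e = s(a, b) →
      α < ν (Wmap ι x y a b))
    (hP3 : ∃ P : G.Walk u₃ v₃, ∀ e ∈ P.edges, ∀ a b : V, e = s(a, b) →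
      α < ν (Wmap ι x y a b))
    (hP2 : ∃ P : G.Walk u₂ v₂, ∀ e ∈ P.edges, ∀ a b : V, e = s(a, b) →
      α < ν (Wmap ι x y a b))
    (hP4 : ∃ P : G.Walk u₂ v₄, ∀ e ∈ P.edges, ∀ a b : V, e = s(a, b) →
      α < ν (Wmap ι x y a b))
    (t1 : lam s(u₁, u₂) ≤ lam s(u₁, u₃) + lam s(u₂, u₃))
    (t2 : lam s(u₁, u₃) ≤ lam s(u₁, u₂) + lam s(u₂, u₃))
    (t3 : lam s(u₂, u₃) ≤ lam s(u₁, u₂) + lam s(u₁, u₃)) :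
    (lam s(u₁, u₂) = lam s(u₁, u₃) + lam s(u₂, u₃) ∨
     lam s(u₁, u₃) = lam s(u₁, u₂) + lam s(u₂, u₃) ∨
     lam s(u₂, u₃) = lam s(u₁, u₂) + lam s(u₁, u₃)) ∨
    (lam s(v₁, v₂) = lam s(v₁, v₄) ∧ lam s(v₂, v₃) = lam s(v₃, v₄)) := by
  by_contra hcon
  push Not at hcon
  obtain ⟨⟨n1, n2, n3⟩, hn⟩ := hcon
  -- the conjugate differences
  let Z : V → V → F := fun u v => (x v - x u) - ι Complex.I * (y v - y u)
  have hI : ι Complex.I * ι Complex.I = -1 := by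
    rw [← map_mul, Complex.I_mul_I]; simp
  have hWZ : ∀ ⦃u v : V⦄, G.Adj u v →
      Wmap ι x y u v * Z u v = (ι ((lam s(u, v) : ℝ) : ℂ)) ^ 2 := by
    intro u v h
    rw [← hedge h]
    simp only [Wmap, Z]
    linear_combination (-(y v - y u) ^ 2) * hI
  have hl : ∀ ⦃u v : V⦄, G.Adj u v → 0 < lam s(u, v) := fun u v h => hpos _ h
  have hlC : ∀ ⦃u v : V⦄, G.Adj u v → ι ((lam s(u, v) : ℝ) : ℂ) ≠ 0 := by
    intro u v h
    rw [map_ne_zero]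
    exact_mod_cast (hl h).ne'
  have hW : ∀ ⦃u v : V⦄, G.Adj u v → Wmap ι x y u v ≠ 0 := by
    intro u v h h0
    have := hWZ h
    rw [h0, zero_mul] at this
    exact hlC h (pow_eq_zero_iff (two_ne_zero)|>.mp this.symm)
  have hswap : ∀ u v, Wmap ι x y u v = - Wmap ι x y v u := by
    intro u v; simp only [Wmap]; ring
  have hZswap : ∀ u v, Z u v = - Z v u := by
    intro u v; simp only [Z]; ring
  obtain ⟨P1, hP1⟩ := hP1
  obtain ⟨P2, hP2⟩ := hP2
  obtain ⟨P3, hP3⟩ := hP3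
  obtain ⟨P4, hP4⟩ := hP4
  have r1 := red_walk G ι x y ν α hν_add P1 hP1
  have r2 := red_walk G ι x y ν α hν_add P2 hP2
  have r3 := red_walk G ι x y ν α hν_add P3 hP3
  have r4 := red_walk G ι x y ν α hν_add P4 hP4
  set w := Wmap ι x y u₁ u₃ with hw
  have hw0 : w ≠ 0 := hW hu13
  have hinv : GtV ν (-α - 1) w⁻¹ := by
    right
    have e1 := hν_mul w w⁻¹ hw0 (inv_ne_zero hw0)
    rw [mul_inv_cancel₀ hw0] at e1
    have e2 := hν_triv 1 one_ne_zero
    rw [map_one] at e2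
    omega
  -- triangle ratio
  have a12 := hWZ hu12
  have a23 := hWZ hu23
  have a13 := hWZ hu13
  have w12 := hW hu12
  have w23 := hW hu23
  have sW : Wmap ι x y u₁ u₂ + Wmap ι x y u₂ u₃ = w := by simp only [hw, Wmap]; ring
  have sZ : Z u₁ u₂ + Z u₂ u₃ = Z u₁ u₃ := by simp only [Z]; ring
  rw [← hw] at a13
  have hquad : ι (((lam s(u₁, u₂) : ℝ) : ℂ) ^ 2) * (1 - Wmap ι x y u₁ u₂ / w)
      + ι (((lam s(u₂, u₃) : ℝ) : ℂ) ^ 2) * (Wmap ι x y u₁ u₂ / w)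
      = ι (((lam s(u₁, u₃) : ℝ) : ℂ) ^ 2) * (Wmap ι x y u₁ u₂ / w *
        (1 - Wmap ι x y u₁ u₂ / w)) := by
    simp only [map_pow]
    rw [← a12, ← a23, ← a13, ← sZ]
    have : Wmap ι x y u₂ u₃ = w - Wmap ι x y u₁ u₂ := by rw [← sW]; ring
    rw [this]
    field_simp
  obtain ⟨c, hc, hcq⟩ := tri_const ι _ _ _
    (pow_ne_zero 2 (by exact_mod_cast (hl hu13).ne')) _ hquad
  have him := tri_im (hl hu12) (hl hu23) (hl hu13) (lt_of_le_of_ne t1 n1)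
    (lt_of_le_of_ne t2 n2) (lt_of_le_of_ne t3 n3) c hcq
  have hc0 : c ≠ 0 := by rintro rfl; simp at him
  have hc1 : 1 - c ≠ 0 := by
    intro h
    have : c = 1 := by linear_combination -h
    rw [this] at him; simp at him
  have hc12 : Wmap ι x y u₁ u₂ = ι c * w := by rw [← hc]; field_simp
  have hc23 : Wmap ι x y u₂ u₃ = ι (1 - c) * w := by
    rw [map_sub, map_one]
    linear_combination sW - hc12
  -- transfer to the four-cycle
  have trans : ∀ (p q p' q' : V) (d : ℂ), Wmap ι x y p q = ι d * w →
      GtV ν α (Wmap ι x y p p') → GtV ν α (Wmap ι x y q q') →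
      CongC ν ι (Wmap ι x y p' q' * w⁻¹) d := by
    intro p q p' q' d hd h1 h2
    have h3 := GtV.add hν_add h2 (GtV.neg ι hν_mul hν_triv h1)
    have h4 := GtV.mul (d := 0) hν_mul h3 hinv (by omega)
    unfold CongC
    convert h4 using 1
    have e : ι d = Wmap ι x y p q * w⁻¹ := by rw [hd]; field_simp
    rw [e]
    simp only [Wmap]; ring
  have k12 := trans _ _ _ _ c hc12 r1 r2
  have k14 := trans _ _ _ _ c hc12 r1 r4
  have k23 := trans _ _ _ _ (1 - c) hc23 r2 r3
  have k43 := trans _ _ _ _ (1 - c) hc23 r4 r3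
  have b12 := hWZ hv12
  have b23 := hWZ hv23
  have b14 := hWZ hv41.symm
  have b43 := hWZ hv34.symm
  rw [Sym2.eq_swap (a := v₄) (b := v₃)] at b43
  have sZ' : Z v₁ v₂ + Z v₂ v₃ - Z v₁ v₄ - Z v₄ v₃ = 0 := by simp only [Z]; ring
  have K := fun (A : ℂ) {f g h : F} {a b d : ℂ} (hf : CongC ν ι f a) (hg : CongC ν ι g b)
    (hh : CongC ν ι h d) => CongC.mul hν_mul hν_add hν_triv (CongC.const ι A)
      (CongC.mul hν_mul hν_add hν_triv hf (CongC.mul hν_mul hν_add hν_triv hg hh))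
  have T := CongC.add hν_add (CongC.add hν_add
      (K (((lam s(v₁, v₂) : ℝ) : ℂ) ^ 2) k23 k14 k43)
      (K (((lam s(v₂, v₃) : ℝ) : ℂ) ^ 2) k12 k14 k43))
    (CongC.add hν_add
      (K (-((lam s(v₁, v₄) : ℝ) : ℂ) ^ 2) k12 k23 k43)
      (K (-((lam s(v₃, v₄) : ℝ) : ℂ) ^ 2) k12 k23 k14))
  have T0 := CongC.uniq hν_triv (c := _) (ι := ι) (ν := ν) (by
    convert T using 1
    simp only [map_pow, map_neg]
    rw [← b12, ← b23, ← b14, ← b43]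
    linear_combination (-(w⁻¹ ^ 3 * Wmap ι x y v₁ v₂ * Wmap ι x y v₂ v₃ * Wmap ι x y v₁ v₄
      * Wmap ι x y v₄ v₃)) * sZ')
  have T1 : (c * (1 - c)) * (((lam s(v₁, v₂) ^ 2 - lam s(v₁, v₄) ^ 2 : ℝ) : ℂ) * (1 - c)
      + ((lam s(v₂, v₃) ^ 2 - lam s(v₃, v₄) ^ 2 : ℝ) : ℂ) * c) = 0 := by
    push_cast
    linear_combination T0
  obtain ⟨f1, f2⟩ := lin_indep him
    ((mul_eq_zero.mp T1).resolve_left (mul_ne_zero hc0 hc1))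
  have g1 : lam s(v₁, v₂) = lam s(v₁, v₄) :=
    (sq_eq_sq₀ (hl hv12).le (hl hv41.symm).le).mp (by linarith)
  have g2 : lam s(v₂, v₃) = lam s(v₃, v₄) :=
    (sq_eq_sq₀ (hl hv23).le (hl hv34).le).mp (by linarith)
  exact hn g1 g2
end
end

section
/- In the valuation setting below, define for any NAC-coloring δ of a graph H (with edges carrying the values ν(W_e)) the gap gap_H(δ, ν) := max{0, min{ν(W_e) : e ∈ E_H, δ(e) = red} − max{ν(W_e) : e ∈ E_H, δ(e) = blue}}. Let G' be a subgraph of G with at least one edge and let δ' be a NAC-coloring of G'. Then gap_{G'}(δ', ν) = Σ_δ gap_G(δ, ν), where the sum ranges over all NAC-colorings δ of G whose restriction to E_{G'} equals δ'. -/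
noncomputable section

/-- A NAC-coloring: a surjective 2-coloring (`true` = red, `false` = blue) of the edges
such that every cycle is monochromatic or contains at least two edges of each color. -/
def IsNACColoring {V : Type*} (G : SimpleGraph V) (δ : G.edgeSet → Bool) : Prop :=
  (∃ e, δ e = true) ∧ (∃ e, δ e = false) ∧
  ∀ ⦃u : V⦄ (W : G.Walk u u), W.IsCycle →
    (∀ e : G.edgeSet, (e : Sym2 V) ∈ W.edges → δ e = true) ∨
    (∀ e : G.edgeSet, (e : Sym2 V) ∈ W.edges → δ e = false) ∨
    (2 ≤ (W.edges.attach.filter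
        (fun e => δ ⟨e.1, W.edges_subset_edgeSet e.2⟩)).length ∧
     2 ≤ (W.edges.attach.filter
        (fun e => !(δ ⟨e.1, W.edges_subset_edgeSet e.2⟩))).length)

/-- The gap of an edge coloring `δ` of `H` with respect to the valuation `ν`:
`max {0, min{ν(W_e) : e red} − max{ν(W_e) : e blue}}`. -/
def gap {V F : Type*} [Field F] (H : SimpleGraph V) (δ : H.edgeSet → Bool)
    (ι : ℂ →+* F) (x y : V → F) (ν : F → ℤ) : ℤ :=
  max 0
    (sInf {n : ℤ | ∃ a b : V, ∃ h : H.Adj a b,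
        δ ⟨s(a, b), H.mem_edgeSet.mpr h⟩ = true ∧ n = ν (Wmap ι x y a b)} -
     sSup {n : ℤ | ∃ a b : V, ∃ h : H.Adj a b,
        δ ⟨s(a, b), H.mem_edgeSet.mpr h⟩ = false ∧ n = ν (Wmap ι x y a b)})

theorem walk_count_aux {V F : Type*} [Field F] (G : SimpleGraph V) (S : AddSubgroup F)
    (g : V → F) (c : Sym2 V → Bool)
    (hc : ∀ a b, G.Adj a b → (c s(a, b) = true ↔ g b - g a ∉ S)) :
    ∀ {u v : V} (p : G.Walk u v),
      (p.edges.countP c = 0 → g v - g u ∈ S) ∧ (p.edges.countP c = 1 → g v - g u ∉ S) := by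
  intro u v p
  induction p with
  | nil => simp [S.zero_mem]
  | @cons a b d h p ih =>
    have e : g d - g a = (g d - g b) + (g b - g a) := by ring
    rw [SimpleGraph.Walk.edges_cons, List.countP_cons, e]
    by_cases hb : c s(a, b) = true
    · have hb' := (hc a b h).1 hb
      simp only [hb, if_true]
      refine ⟨fun h0 => by omega, fun h1 => ?_⟩
      have := ih.1 (by omega)
      rwa [S.add_mem_cancel_left this]
    · have hb' : g b - g a ∈ S := by
        by_contra hn
        exact hb ((hc a b h).2 hn)
      simp only [hb]
      rw [S.add_mem_cancel_right hb']
      simpa using ih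

/-- Elements of valuation at least `β`, together with zero. -/
def valSubgroup {F : Type*} [Field F] (ν : F → ℤ) (hneg : ∀ z, ν (-z) = ν z)
    (hν_add : ∀ a b : F, a ≠ 0 → b ≠ 0 → a + b ≠ 0 → min (ν a) (ν b) ≤ ν (a + b))
    (β : ℤ) : AddSubgroup F where
  carrier := {z | z = 0 ∨ β ≤ ν z}
  zero_mem' := Or.inl rfl
  add_mem' := by
    rintro a b ha hb
    by_cases h0 : a = 0
    · subst h0; simpa using hb
    by_cases h1 : b = 0
    · subst h1; simpa using ha
    by_cases h2 : a + b = 0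
    · exact Or.inl h2
    have ha' := ha.resolve_left h0
    have hb' := hb.resolve_left h1
    exact Or.inr (le_trans (le_min ha' hb') (hν_add a b h0 h1 h2))
  neg_mem' := by
    rintro a (ha | ha)
    · left; simp [ha]
    · right; rwa [hneg]

theorem gap_eq_card_aux {V F : Type*} [Fintype V] [Field F] (H : SimpleGraph V)
    (δ : H.edgeSet → Bool) (ι : ℂ →+* F) (x y : V → F) (ν : F → ℤ)
    (h1 : ∃ e, δ e = true) (h2 : ∃ e, δ e = false) :
    ∃ A : Finset ℤ, gap H δ ι x y ν = (A.card : ℤ) ∧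
      ∀ α, α ∈ A ↔ ∀ a b (h : H.Adj a b),
        (δ ⟨s(a, b), H.mem_edgeSet.mpr h⟩ = true ↔ α < ν (Wmap ι x y a b)) := by
  unfold gap
  set R := {n : ℤ | ∃ a b : V, ∃ h : H.Adj a b,
        δ ⟨s(a, b), H.mem_edgeSet.mpr h⟩ = true ∧ n = ν (Wmap ι x y a b)} with hR
  set B := {n : ℤ | ∃ a b : V, ∃ h : H.Adj a b,
        δ ⟨s(a, b), H.mem_edgeSet.mpr h⟩ = false ∧ n = ν (Wmap ι x y a b)} with hB
  have hfin : (Set.range (fun p : V × V => ν (Wmap ι x y p.1 p.2))).Finite := Set.finite_range _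
  have hRf : R.Finite := hfin.subset (by
    rintro n ⟨a, b, _, _, rfl⟩; exact ⟨(a, b), rfl⟩)
  have hBf : B.Finite := hfin.subset (by
    rintro n ⟨a, b, _, _, rfl⟩; exact ⟨(a, b), rfl⟩)
  have hRn : R.Nonempty := by
    obtain ⟨⟨e, he⟩, hd⟩ := h1
    induction e using Sym2.ind with
    | _ a b => exact ⟨_, a, b, H.mem_edgeSet.mp he, hd, rfl⟩
  have hBn : B.Nonempty := by
    obtain ⟨⟨e, he⟩, hd⟩ := h2
    induction e using Sym2.ind with
    | _ a b => exact ⟨_, a, b, H.mem_edgeSet.mp he, hd, rfl⟩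
  refine ⟨Finset.Ico (sSup B) (sInf R), ?_, ?_⟩
  · rw [Int.card_Ico]; omega
  · intro α
    rw [Finset.mem_Ico, csSup_le_iff hBf.bddAbove hBn, Int.lt_iff_add_one_le,
      le_csInf_iff hRf.bddBelow hRn]
    constructor
    · rintro ⟨hb, hr⟩ a b h
      cases hd : δ ⟨s(a, b), H.mem_edgeSet.mpr h⟩ with
      | true =>
        have := hr _ ⟨a, b, h, hd, rfl⟩
        simp; omega
      | false =>
        have := hb _ ⟨a, b, h, hd, rfl⟩
        simp; omega
    · intro hh
      refine ⟨?_, ?_⟩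
      · rintro _ ⟨a, b, h, hd, rfl⟩
        have := hh a b h
        rw [hd] at this
        simp at this; omega
      · rintro _ ⟨a, b, h, hd, rfl⟩
        have := (hh a b h).1 hd
        omega

theorem nac_of_count_aux {V : Type*} (G : SimpleGraph V) (c : Sym2 V → Bool)
    (h1 : ∃ e : G.edgeSet, c e = true) (h2 : ∃ e : G.edgeSet, c e = false)
    (ht : ∀ ⦃u : V⦄ (p : G.Walk u u), p.edges.countP c ≠ 1)
    (hf : ∀ ⦃u : V⦄ (p : G.Walk u u), p.edges.countP (fun e => !(c e)) ≠ 1) :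
    IsNACColoring G (fun e => c e) := by
  refine ⟨h1, h2, fun u p _ => ?_⟩
  rw [← List.countP_eq_length_filter, ← List.countP_eq_length_filter]
  have e1 : List.countP (fun e : {x // x ∈ p.edges} => c e.1) p.edges.attach
      = p.edges.countP c := List.countP_attach ..
  have e2 : List.countP (fun e : {x // x ∈ p.edges} => !(c e.1)) p.edges.attach
      = p.edges.countP (fun e => !(c e)) := List.countP_attach (p := fun e => !(c e)) ..
  simp only [e1, e2]
  by_cases z1 : p.edges.countP c = 0
  · right; left
    rw [List.countP_eq_zero] at z1
    intro e he
    simpa using z1 e he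
  by_cases z2 : p.edges.countP (fun e => !(c e)) = 0
  · left
    rw [List.countP_eq_zero] at z2
    intro e he
    simpa using z2 e he
  have := ht p
  have := hf p
  right; right
  omega

/-- In the valuation setting, for a subgraph `G'` of `G` and a NAC-coloring `δ'` of `G'`,
the gap of `δ'` equals the sum of the gaps of all NAC-colorings of `G` restricting
to `δ'`. -/
theorem gap_restriction_sum
    {V F : Type*} [Fintype V] [Field F] (G G' : SimpleGraph V) (hle : G' ≤ G)
    (lam : Sym2 V → ℝ)
    (ι : ℂ →+* F) (x y : V → F) (ν : F → ℤ)
    (hpos : ∀ e ∈ G.edgeSet, 0 < lam e)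
    (hedge : ∀ ⦃u v : V⦄, G.Adj u v →
      (x u - x v) ^ 2 + (y u - y v) ^ 2 = (ι ((lam s(u, v) : ℝ) : ℂ)) ^ 2)
    (hν_mul : ∀ a b : F, a ≠ 0 → b ≠ 0 → ν (a * b) = ν a + ν b)
    (hν_add : ∀ a b : F, a ≠ 0 → b ≠ 0 → a + b ≠ 0 → min (ν a) (ν b) ≤ ν (a + b))
    (hν_triv : ∀ c : ℂ, c ≠ 0 → ν (ι c) = 0)
    (hG'ne : G'.edgeSet.Nonempty)
    (δ' : G'.edgeSet → Bool) (hδ' : IsNACColoring G' δ') :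
    gap G' δ' ι x y ν =
      ∑ᶠ δ ∈ {δ : G.edgeSet → Bool | IsNACColoring G δ ∧
          ∀ e : G'.edgeSet, δ ⟨e.1, SimpleGraph.edgeSet_mono hle e.2⟩ = δ' e},
        gap G δ ι x y ν := by
  classical
  have hm1 : ν (-1) = 0 := by
    have := hν_triv (-1) (by simp)
    simpa using this
  have hneg : ∀ z, ν (-z) = ν z := by
    intro z
    by_cases hz : z = 0
    · simp [hz]
    · have := hν_mul (-1) z (by simp) hz
      rw [hm1] at this
      simpa using this
  have hWs : ∀ a b, ν (Wmap ι x y b a) = ν (Wmap ι x y a b) := by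
    intro a b
    rw [← hneg]
    congr 1
    unfold Wmap; ring
  have hI : ι Complex.I * ι Complex.I = -1 := by
    rw [← map_mul, Complex.I_mul_I]; simp
  -- W and Z
  let gW : V → F := fun v => x v + ι Complex.I * y v
  let gZ : V → F := fun v => x v - ι Complex.I * y v
  have hgW : ∀ a b, gW b - gW a = Wmap ι x y a b := by
    intro a b; simp only [gW, Wmap]; ring
  have hWZ : ∀ a b, G.Adj a b →
      Wmap ι x y a b * (gZ b - gZ a) = ι (((lam s(a, b) : ℝ) : ℂ) ^ 2) := by
    intro a b h
    rw [map_pow, ← hedge h]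
    simp only [gZ, Wmap]
    linear_combination (-(y b - y a) ^ 2) * hI
  have hlam : ∀ a b, G.Adj a b → (((lam s(a, b) : ℝ) : ℂ) ^ 2) ≠ 0 := by
    intro a b h
    have := hpos s(a, b) h
    exact pow_ne_zero _ (by exact_mod_cast this.ne')
  have hne : ∀ a b, G.Adj a b → Wmap ι x y a b * (gZ b - gZ a) ≠ 0 := by
    intro a b h
    rw [hWZ a b h]
    exact (map_ne_zero ι).2 (hlam a b h)
  have hZν : ∀ a b, G.Adj a b → ν (gZ b - gZ a) = - ν (Wmap ι x y a b) := by
    intro a b h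
    have h0 := hne a b h
    have := hν_mul _ _ (left_ne_zero_of_mul h0) (right_ne_zero_of_mul h0)
    rw [hWZ a b h, hν_triv _ (hlam a b h)] at this
    omega
  -- threshold colorings
  let c : ℤ → Sym2 V → Bool := fun α e => decide (∀ a b, e = s(a, b) → α < ν (Wmap ι x y a b))
  have hc : ∀ α a b, c α s(a, b) = true ↔ α < ν (Wmap ι x y a b) := by
    intro α a b
    simp only [c, decide_eq_true_eq]
    refine ⟨fun h => h a b rfl, fun h a' b' e => ?_⟩
    rcases Sym2.eq_iff.1 e with ⟨rfl, rfl⟩ | ⟨rfl, rfl⟩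
    · exact h
    · rwa [hWs]
  have hNAC : ∀ α, (∃ e : G.edgeSet, c α e = true) → (∃ e : G.edgeSet, c α e = false) →
      IsNACColoring G (fun e => c α e) := by
    intro α h1 h2
    refine nac_of_count_aux G (c α) h1 h2 ?_ ?_
    · intro u p hp
      refine (walk_count_aux G (valSubgroup ν hneg hν_add (-α)) gZ (c α) ?_ p).2 hp
        (by rw [sub_self]; exact AddSubgroup.zero_mem _)
      intro a b h
      rw [hc]
      change _ ↔ ¬ (gZ b - gZ a = 0 ∨ -α ≤ ν (gZ b - gZ a))
      rw [hZν a b h]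
      have := right_ne_zero_of_mul (hne a b h)
      simp only [this, false_or]
      omega
    · intro u p hp
      refine (walk_count_aux G (valSubgroup ν hneg hν_add (α + 1)) gW
        (fun e => !(c α e)) ?_ p).2 hp (by rw [sub_self]; exact AddSubgroup.zero_mem _)
      intro a b h
      rw [Bool.not_eq_true', ← Bool.not_eq_true, hc]
      change _ ↔ ¬ (gW b - gW a = 0 ∨ α + 1 ≤ ν (gW b - gW a))
      rw [hgW]
      have := left_ne_zero_of_mul (hne a b h)
      simp only [this, false_or]
      omega
  have hthr : ∀ (H : SimpleGraph V) (δ : H.edgeSet → Bool) (α : ℤ),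
      (∀ a b (h : H.Adj a b),
        (δ ⟨s(a, b), H.mem_edgeSet.mpr h⟩ = true ↔ α < ν (Wmap ι x y a b))) ↔
      ∀ e : H.edgeSet, δ e = c α e := by
    intro H δ α
    constructor
    · rintro hh ⟨e, he⟩
      induction e using Sym2.ind with
      | _ a b =>
        rw [Bool.eq_iff_iff, hc]
        exact hh a b he
    · intro hh a b h
      rw [hh, hc]
  set S := {δ : G.edgeSet → Bool | IsNACColoring G δ ∧
          ∀ e : G'.edgeSet, δ ⟨e.1, SimpleGraph.edgeSet_mono hle e.2⟩ = δ' e} with hS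
  have hSf : S.Finite := Set.toFinite _
  obtain ⟨A', hA'c, hA'⟩ := gap_eq_card_aux G' δ' ι x y ν hδ'.1 hδ'.2.1
  have hex : ∀ δ : G.edgeSet → Bool, ∃ A : Finset ℤ, δ ∈ S →
      (gap G δ ι x y ν = (A.card : ℤ) ∧ ∀ α, α ∈ A ↔ ∀ e : G.edgeSet, δ e = c α e) := by
    intro δ
    by_cases hδ : δ ∈ S
    · obtain ⟨A, h1, h2⟩ := gap_eq_card_aux G δ ι x y ν hδ.1.1 hδ.1.2.1
      exact ⟨A, fun _ => ⟨h1, fun α => (h2 α).trans (hthr G δ α)⟩⟩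
    · exact ⟨∅, fun h => absurd h hδ⟩
  choose A hA using hex
  have hU : A' = hSf.toFinset.biUnion A := by
    ext α
    rw [hA', hthr, Finset.mem_biUnion]
    constructor
    · intro hh
      have hmem : (fun e : G.edgeSet => c α e) ∈ S := by
        refine ⟨hNAC α ?_ ?_, fun e => (hh e).symm⟩
        · obtain ⟨e, he⟩ := hδ'.1
          exact ⟨⟨e.1, SimpleGraph.edgeSet_mono hle e.2⟩, (hh e).symm.trans he⟩
        · obtain ⟨e, he⟩ := hδ'.2.1
          exact ⟨⟨e.1, SimpleGraph.edgeSet_mono hle e.2⟩, (hh e).symm.trans he⟩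
      exact ⟨_, hSf.mem_toFinset.2 hmem, ((hA _ hmem).2 α).2 fun _ => rfl⟩
    · rintro ⟨δ, hδ, hα⟩ e
      have hδ := hSf.mem_toFinset.1 hδ
      rw [← hδ.2 e]
      exact ((hA δ hδ).2 α).1 hα _
  rw [finsum_mem_eq_finite_toFinset_sum _ hSf, hA'c, hU, Finset.card_biUnion]
  · push_cast
    refine Finset.sum_congr rfl fun δ hδ => ?_
    exact ((hA δ (hSf.mem_toFinset.1 hδ)).1).symm
  · intro δ₁ h1 δ₂ h2 hn
    refine Finset.disjoint_left.2 ?_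
    intro α ha hb
    have h1 := Finset.mem_coe.1 h1
    have h2 := Finset.mem_coe.1 h2
    apply hn
    funext e
    rw [((hA δ₁ (hSf.mem_toFinset.1 h1)).2 α).1 ha, ((hA δ₂ (hSf.mem_toFinset.1 h2)).2 α).1 hb]
end
end

section
/- In the valuation setting below, for every α ∈ ℤ, if the threshold coloring δ_α is surjective (i.e., both colors occur), then δ_α is a NAC-coloring of G. -/
noncomputable section

/-- Along a walk, zero bad edges give a good displacement, one bad edge a bad one. -/
theorem walk_aux {V F : Type*} [Field F] {G : SimpleGraph V} (S : AddSubgroup F) (f : V → F)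
    (q : Sym2 V → Bool) (hq : ∀ a b, G.Adj a b → (q s(a, b) = true ↔ f b - f a ∉ S))
    {u v : V} (p : G.Walk u v) :
    (p.edges.countP q = 0 → f v - f u ∈ S) ∧ (p.edges.countP q = 1 → f v - f u ∉ S) := by
  induction p with
  | nil => simp
  | @cons a b c h p ih =>
    have e : f c - f a = (f b - f a) + (f c - f b) := by ring
    rw [SimpleGraph.Walk.edges_cons, List.countP_cons, e]
    by_cases hb : q s(a, b) = true
    · have h1 := (hq a b h).1 hb
      simp only [hb, if_true]
      refine ⟨fun h => by omega, fun h2 h3 => h1 ?_⟩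
      exact (S.add_mem_cancel_right (ih.1 (by omega))).1 h3
    · have h1 : f b - f a ∈ S := by
        by_contra h2
        exact hb ((hq a b h).2 h2)
      rw [if_neg hb]
      refine ⟨fun h2 => S.add_mem h1 (ih.1 (by omega)), fun h2 h3 => ih.2 (by omega) ?_⟩
      exact (S.add_mem_cancel_left h1).1 h3

/-- The dichotomy for the number of edges of a given color in a closed walk. -/
theorem cycle_aux {V F : Type*} [Field F] {G : SimpleGraph V} (S : AddSubgroup F) (f : V → F)
    (δ : G.edgeSet → Bool)
    (hq : ∀ a b (h : G.Adj a b),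
      (δ ⟨s(a, b), G.mem_edgeSet.mpr h⟩ = true ↔ f b - f a ∉ S))
    {u : V} (W : G.Walk u u) :
    (∀ e : G.edgeSet, (e : Sym2 V) ∈ W.edges → δ e = false) ∨
    2 ≤ (W.edges.attach.filter
        (fun e => δ ⟨e.1, W.edges_subset_edgeSet e.2⟩)).length := by
  classical
  let q : Sym2 V → Bool := fun e => if h : e ∈ G.edgeSet then δ ⟨e, h⟩ else false
  have hqe : ∀ e (h : e ∈ G.edgeSet), q e = δ ⟨e, h⟩ := fun e h => dif_pos h
  have key := walk_aux S f q (fun a b h => by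
    rw [hqe _ (G.mem_edgeSet.mpr h)]; exact hq a b h) W
  have hlen : (W.edges.attach.filter
        (fun e => δ ⟨e.1, W.edges_subset_edgeSet e.2⟩)).length = W.edges.countP q := by
    rw [← List.countP_attach, List.countP_eq_length_filter]
    congr 2
    funext e
    exact (hqe _ _).symm
  rw [hlen]
  have h1 : W.edges.countP q ≠ 1 := fun h => key.2 h (by simp)
  by_cases h0 : W.edges.countP q = 0
  · left
    intro e he
    have := List.countP_eq_zero.1 h0 _ he
    rw [hqe _ e.2] at this
    simpa using this
  · right; omega

/-- In the valuation setting, every surjective threshold coloring `δ_α`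
(an edge is red iff `ν(W_e) > α`) is a NAC-coloring. -/
theorem threshold_coloring_is_NAC
    {V F : Type*} [Fintype V] [Field F] (G : SimpleGraph V) (lam : Sym2 V → ℝ)
    (ι : ℂ →+* F) (x y : V → F) (ν : F → ℤ) (α : ℤ)
    (hpos : ∀ e ∈ G.edgeSet, 0 < lam e)
    (hedge : ∀ ⦃u v : V⦄, G.Adj u v →
      (x u - x v) ^ 2 + (y u - y v) ^ 2 = (ι ((lam s(u, v) : ℝ) : ℂ)) ^ 2)
    (hν_mul : ∀ a b : F, a ≠ 0 → b ≠ 0 → ν (a * b) = ν a + ν b)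
    (hν_add : ∀ a b : F, a ≠ 0 → b ≠ 0 → a + b ≠ 0 → min (ν a) (ν b) ≤ ν (a + b))
    (hν_triv : ∀ c : ℂ, c ≠ 0 → ν (ι c) = 0)
    (δ : G.edgeSet → Bool)
    (hδ : ∀ (a b : V) (h : G.Adj a b),
      δ ⟨s(a, b), G.mem_edgeSet.mpr h⟩ = true ↔ α < ν (Wmap ι x y a b))
    (hred : ∃ e, δ e = true) (hblue : ∃ e, δ e = false) :
    IsNACColoring G δ := by
  have hneg : ∀ a : F, a ≠ 0 → ν (-a) = ν a := fun a ha => by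
    have h1 := hν_mul (ι (-1)) a (by simp) ha
    rw [hν_triv (-1) (by simp)] at h1
    simpa using h1
  let S : ℤ → AddSubgroup F := fun β =>
    { carrier := {a | a = 0 ∨ β ≤ ν a}
      zero_mem' := Or.inl rfl
      add_mem' := by
        intro a b ha hb
        by_cases ha0 : a = 0
        · subst ha0; simpa using hb
        by_cases hb0 : b = 0
        · subst hb0; simpa using ha
        by_cases hab : a + b = 0
        · exact Or.inl hab
        right
        have h1 := ha.resolve_left ha0
        have h2 := hb.resolve_left hb0
        exact (le_min h1 h2).trans (hν_add a b ha0 hb0 hab)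
      neg_mem' := by
        intro a ha
        by_cases ha0 : a = 0
        · subst ha0; simp
        right
        rw [hneg a ha0]
        exact ha.resolve_left ha0 }
  have hS : ∀ β a, a ∈ S β ↔ (a = 0 ∨ β ≤ ν a) := fun β a => Iff.rfl
  have hI : ι Complex.I * ι Complex.I = -1 := by
    rw [← map_mul, Complex.I_mul_I]; simp
  let f : V → F := fun v => x v + ι Complex.I * y v
  let g : V → F := fun v => x v - ι Complex.I * y v
  have hf : ∀ a b, f b - f a = Wmap ι x y a b := fun a b => by
    simp only [f, Wmap]; ring
  have hprod : ∀ a b, G.Adj a b → (f b - f a) * (g b - g a) = ι ((lam s(a, b) : ℝ) : ℂ) ^ 2 := by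
    intro a b h
    rw [← hedge h]
    simp only [f, g]
    linear_combination (-(y b - y a) ^ 2) * hI
  have hW : ∀ a b, G.Adj a b → f b - f a ≠ 0 ∧ g b - g a ≠ 0 ∧
      ν (f b - f a) + ν (g b - g a) = 0 := by
    intro a b h
    have hl : ((lam s(a, b) : ℝ) : ℂ) ^ 2 ≠ 0 := by
      have := (hpos _ (G.mem_edgeSet.mpr h)).ne'
      exact pow_ne_zero _ (by exact_mod_cast this)
    have hp := hprod a b h
    rw [← map_pow] at hp
    have hne : (f b - f a) * (g b - g a) ≠ 0 := by
      rw [hp]; exact (map_ne_zero ι).2 hl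
    have h1 := left_ne_zero_of_mul hne
    have h2 := right_ne_zero_of_mul hne
    refine ⟨h1, h2, ?_⟩
    rw [← hν_mul _ _ h1 h2, hp, hν_triv _ hl]
  refine ⟨hred, hblue, fun u W _ => ?_⟩
  have hR := cycle_aux (S (-α)) g δ (fun a b h => by
    obtain ⟨h1, h2, h3⟩ := hW a b h
    rw [hδ a b h, ← hf, hS]
    simp only [h2, false_or]
    omega) W
  have hB := cycle_aux (S (α + 1)) f (fun e => !(δ e)) (fun a b h => by
    obtain ⟨h1, h2, h3⟩ := hW a b h
    have h4 := hδ a b h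
    rw [← hf] at h4
    rw [hS, Bool.not_eq_true', ← Bool.not_eq_true, h4]
    simp only [h1, false_or]
    omega) W
  rcases hB with hB | hB
  · left
    intro e he
    simpa using hB e he
  · rcases hR with hR | hR
    · exact Or.inr (Or.inl hR)
    · exact Or.inr (Or.inr ⟨hR, hB⟩)
end
end

section
/- The three-prism graph has exactly two NAC-colorings: the coloring in which the edges 14, 25, 36 are red and the six triangle edges 12, 13, 23, 45, 46, 56 are blue, and its conjugate. -/
/-- The three-prism graph, with vertices `0,…,5` standing for `1,…,6`. -/
def Prism : SimpleGraph (Fin 6) :=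
  SimpleGraph.fromEdgeSet
    {s(0, 1), s(0, 2), s(1, 2), s(3, 4), s(3, 5), s(4, 5), s(0, 3), s(1, 4), s(2, 5)}

/-- The NAC condition on cycles, phrased with a color function on all of `Sym2 V`. -/
theorem nac_cycle_iff {V : Type*} (G : SimpleGraph V) (δ : G.edgeSet → Bool)
    (d : Sym2 V → Bool) (hd : ∀ e : G.edgeSet, δ e = d e.1) {u : V} (W : G.Walk u u) :
    ((∀ e : G.edgeSet, (e : Sym2 V) ∈ W.edges → δ e = true) ∨
    (∀ e : G.edgeSet, (e : Sym2 V) ∈ W.edges → δ e = false) ∨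
    (2 ≤ (W.edges.attach.filter
        (fun e => δ ⟨e.1, W.edges_subset_edgeSet e.2⟩)).length ∧
     2 ≤ (W.edges.attach.filter
        (fun e => !(δ ⟨e.1, W.edges_subset_edgeSet e.2⟩))).length)) ↔
    ((∀ e ∈ W.edges, d e = true) ∨ (∀ e ∈ W.edges, d e = false) ∨
      (2 ≤ W.edges.countP d ∧ 2 ≤ W.edges.countP (fun e => !d e))) := by
  have key : ∀ p : Sym2 V → Bool,
      (W.edges.attach.filter (fun e => p e.1)).length = W.edges.countP p := by
    intro p
    rw [← List.countP_eq_length_filter]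
    exact List.countP_attach
  have h1 : ∀ b : Bool, (∀ e : G.edgeSet, (e : Sym2 V) ∈ W.edges → δ e = b) ↔
      (∀ e ∈ W.edges, d e = b) := by
    intro b
    constructor
    · intro h e he
      rw [← h ⟨e, W.edges_subset_edgeSet he⟩ he, hd]
    · intro h e he
      rw [hd, h _ he]
  simp only [h1]
  simp only [hd]
  rw [key d, key (fun e => !d e)]

/-- If `p` marks exactly the edges along which `f` changes, a walk with no marked edge preserves
`f` and a walk with one marked edge changes it. -/
theorem walk_count {V α : Type*} (G : SimpleGraph V) (f : V → α) (p : Sym2 V → Bool)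
    (hp : ∀ u v, G.Adj u v → (p s(u, v) = true ↔ f u ≠ f v)) {u v : V} (W : G.Walk u v) :
    (W.edges.countP p = 0 → f u = f v) ∧ (W.edges.countP p = 1 → f u ≠ f v) := by
  induction W with
  | nil => simp
  | @cons a b c h W ih =>
    have := hp a b h
    rw [SimpleGraph.Walk.edges_cons, List.countP_cons]
    by_cases hq : p s(a, b) = true
    · simp only [hq, if_true]
      refine ⟨by omega, fun h0 => ?_⟩
      rw [← ih.1 (by omega)]
      exact this.1 hq
    · have e : f a = f b := by
        by_contra hne
        exact hq (this.2 hne)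
      simp only [hq, e]
      simpa using ih

theorem closed_count {V α : Type*} (G : SimpleGraph V) (f : V → α) (p : Sym2 V → Bool)
    (hp : ∀ u v, G.Adj u v → (p s(u, v) = true ↔ f u ≠ f v)) {u : V} (W : G.Walk u u) :
    (∀ e ∈ W.edges, p e = false) ∨ 2 ≤ W.edges.countP p := by
  by_cases h : W.edges.countP p = 0
  · left
    simpa using List.countP_eq_zero.1 h
  · right
    have : W.edges.countP p ≠ 1 := fun h1 => (walk_count G f p hp W).2 h1 rfl
    omega

/-- The matching edges of the prism. -/
def crossEdge (e : Sym2 (Fin 6)) : Bool :=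
  decide (e = s(0, 3) ∨ e = s(1, 4) ∨ e = s(2, 5))

theorem prism_adj (u v : Fin 6) : Prism.Adj u v ↔
    (s(u, v) ∈ ({s(0, 1), s(0, 2), s(1, 2), s(3, 4), s(3, 5), s(4, 5), s(0, 3), s(1, 4),
      s(2, 5)} : Finset (Sym2 (Fin 6))) ∧ u ≠ v) := by
  simp [Prism]

theorem cross_side : ∀ u v, Prism.Adj u v →
    (crossEdge s(u, v) = true ↔ decide (u < 3) ≠ decide (v < 3)) := by
  simp only [prism_adj, crossEdge]
  decide

theorem tri_side : ∀ u v, Prism.Adj u v →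
    ((!crossEdge s(u, v)) = true ↔ u.val % 3 ≠ v.val % 3) := by
  simp only [prism_adj, crossEdge]
  decide

theorem bool_aux (a b c d e f x y z : Bool) (t1 : a = c ∧ a = b) (t2 : d = f ∧ d = e)
    (q1 : a = d ↔ y = x) (q2 : c = f ↔ z = y) (q3 : b = e ↔ z = x) :
    a = d ∧ x = y ∧ x = z := by
  obtain ⟨rfl, rfl⟩ := t1
  obtain ⟨rfl, rfl⟩ := t2
  revert a d x y z
  decide

theorem prism_closed {u : Fin 6} (W : Prism.Walk u u) :
    (∀ e ∈ W.edges, crossEdge e = true) ∨ (∀ e ∈ W.edges, crossEdge e = false) ∨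
      (2 ≤ W.edges.countP crossEdge ∧ 2 ≤ W.edges.countP (fun e => !crossEdge e)) := by
  have h1 := closed_count Prism _ crossEdge cross_side W
  have h2 := closed_count Prism (fun u : Fin 6 => u.val % 3) (fun e => !crossEdge e) tri_side W
  simp only [Bool.not_eq_false'] at h2
  tauto

theorem tri_cond (d : Sym2 (Fin 6) → Bool)
    (H : ∀ (u : Fin 6) (W : Prism.Walk u u), W.IsCycle →
      ((∀ e ∈ W.edges, d e = true) ∨ (∀ e ∈ W.edges, d e = false) ∨
      (2 ≤ W.edges.countP d ∧ 2 ≤ W.edges.countP (fun e => !d e))))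
    (a b c : Fin 6) (hab : Prism.Adj a b) (hbc : Prism.Adj b c) (hca : Prism.Adj c a) :
    d s(a, b) = d s(b, c) ∧ d s(a, b) = d s(c, a) := by
  have n1 := hab.ne
  have n2 := hbc.ne
  have n3 := hca.ne
  have := H a (.cons hab (.cons hbc (.cons hca .nil))) (by
    simp [SimpleGraph.Walk.isCycle_def, SimpleGraph.Walk.isTrail_def]
    grind)
  simp [List.countP_cons] at this
  cases h1 : d s(a, b) <;> cases h2 : d s(b, c) <;> cases h3 : d s(c, a) <;> simp_all

theorem quad_cond (d : Sym2 (Fin 6) → Bool)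
    (H : ∀ (u : Fin 6) (W : Prism.Walk u u), W.IsCycle →
      ((∀ e ∈ W.edges, d e = true) ∨ (∀ e ∈ W.edges, d e = false) ∨
      (2 ≤ W.edges.countP d ∧ 2 ≤ W.edges.countP (fun e => !d e))))
    (a b c x : Fin 6) (hab : Prism.Adj a b) (hbc : Prism.Adj b c) (hcx : Prism.Adj c x)
    (hxa : Prism.Adj x a) (hac : a ≠ c) (hbx : b ≠ x) :
    (d s(a, b) = d s(c, x) ↔ d s(b, c) = d s(x, a)) := by
  have n1 := hab.ne
  have n2 := hbc.ne
  have n3 := hcx.ne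
  have n4 := hxa.ne
  have := H a (.cons hab (.cons hbc (.cons hcx (.cons hxa .nil)))) (by
    simp [SimpleGraph.Walk.isCycle_def, SimpleGraph.Walk.isTrail_def]
    grind)
  simp [List.countP_cons] at this
  cases h1 : d s(a, b) <;> cases h2 : d s(b, c) <;> cases h3 : d s(c, x) <;>
    cases h4 : d s(x, a) <;> simp_all

/-- The three-prism has exactly two NAC-colorings: the one whose red edges are
`14, 25, 36` (here `s(0,3), s(1,4), s(2,5)`) and blue edges the six triangle edges,
and its conjugate. -/
theorem prism_NAC_colorings :
    {δ : Prism.edgeSet → Bool | IsNACColoring Prism δ} =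
      {fun (e : Prism.edgeSet) =>
          decide (e.1 = s(0, 3) ∨ e.1 = s(1, 4) ∨ e.1 = s(2, 5)),
       fun (e : Prism.edgeSet) =>
          !decide (e.1 = s(0, 3) ∨ e.1 = s(1, 4) ∨ e.1 = s(2, 5))} := by
  have m1 : s(0, 3) ∈ Prism.edgeSet := by
    rw [SimpleGraph.mem_edgeSet, prism_adj]; decide
  have m2 : s(0, 1) ∈ Prism.edgeSet := by
    rw [SimpleGraph.mem_edgeSet, prism_adj]; decide
  ext δ
  simp only [Set.mem_ofPred_eq, Set.mem_insert_iff, Set.mem_singleton_iff]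
  constructor
  · rintro ⟨⟨e1, he1⟩, ⟨e2, he2⟩, hW⟩
    classical
    obtain ⟨d, hd⟩ : ∃ d : Sym2 (Fin 6) → Bool, ∀ e : Prism.edgeSet, δ e = d e.1 :=
      ⟨fun e => if h : e ∈ Prism.edgeSet then δ ⟨e, h⟩ else false, fun e => by simp⟩
    have H := fun (u : Fin 6) (W : Prism.Walk u u) (hc : W.IsCycle) =>
      (nac_cycle_iff Prism δ d hd W).1 (hW W hc)
    have A : ∀ u v, _ → Prism.Adj u v := fun u v => (prism_adj u v).2
    have t1 := tri_cond d H 0 1 2 (A _ _ (by decide)) (A _ _ (by decide)) (A _ _ (by decide))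
    have t2 := tri_cond d H 3 4 5 (A _ _ (by decide)) (A _ _ (by decide)) (A _ _ (by decide))
    have q1 := quad_cond d H 0 1 4 3 (A _ _ (by decide)) (A _ _ (by decide)) (A _ _ (by decide))
      (A _ _ (by decide)) (by decide) (by decide)
    have q2 := quad_cond d H 1 2 5 4 (A _ _ (by decide)) (A _ _ (by decide)) (A _ _ (by decide))
      (A _ _ (by decide)) (by decide) (by decide)
    have q3 := quad_cond d H 0 2 5 3 (A _ _ (by decide)) (A _ _ (by decide)) (A _ _ (by decide))
      (A _ _ (by decide)) (by decide) (by decide)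
    rw [Sym2.eq_swap (a := (2 : Fin 6)) (b := 0)] at t1
    rw [Sym2.eq_swap (a := (5 : Fin 6)) (b := 3)] at t2 q3
    rw [Sym2.eq_swap (a := (4 : Fin 6)) (b := 3), Sym2.eq_swap (a := (3 : Fin 6)) (b := 0)] at q1
    rw [Sym2.eq_swap (a := (5 : Fin 6)) (b := 4), Sym2.eq_swap (a := (4 : Fin 6)) (b := 1)] at q2
    rw [Sym2.eq_swap (a := (3 : Fin 6)) (b := 0)] at q3
    have edges : ∀ e : Prism.edgeSet, e.1 = s(0, 1) ∨ e.1 = s(0, 2) ∨ e.1 = s(1, 2) ∨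
        e.1 = s(3, 4) ∨ e.1 = s(3, 5) ∨ e.1 = s(4, 5) ∨ e.1 = s(0, 3) ∨ e.1 = s(1, 4) ∨
        e.1 = s(2, 5) := by
      rintro ⟨e, he⟩
      simp only [Prism, SimpleGraph.edgeSet_fromEdgeSet] at he
      simpa using he.1
    rw [hd] at he1 he2
    have s1 : d s(0, 1) = d s(3, 4) ∧ d s(0, 3) = d s(1, 4) ∧ d s(0, 3) = d s(2, 5) :=
      bool_aux _ _ _ _ _ _ _ _ _ t1 t2 q1 q2 q3
    obtain ⟨t3, t4⟩ := t1
    obtain ⟨t5, t6⟩ := t2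
    obtain ⟨s3, s4, s5⟩ := s1
    clear q1 q2 q3 H A hW
    have s2 : d s(0, 1) ≠ d s(0, 3) := by
      intro h
      have : ∀ e : Prism.edgeSet, d e.1 = d s(0, 1) := by
        intro e
        rcases edges e with h | h | h | h | h | h | h | h | h <;> rw [h] <;> simp_all only
      have h1 := this e1
      have h2 := this e2
      rw [← h2, he2] at h1
      rw [he1] at h1
      cases h1
    have s6 : d s(0, 1) = !d s(0, 3) := by
      revert s2
      cases d s(0, 1) <;> cases d s(0, 3) <;> simp
    have fin : ∀ e : Prism.edgeSet, δ e = if crossEdge e.1 then d s(0, 3) else !d s(0, 3) := by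
      intro e
      rw [hd]
      rcases edges e with h | h | h | h | h | h | h | h | h <;> rw [h] <;>
        simp [crossEdge] <;> simp_all only
    cases hb : d s(0, 3)
    · right
      funext e
      rw [fin, hb]
      change _ = !crossEdge e.1
      cases crossEdge e.1 <;> rfl
    · left
      funext e
      rw [fin, hb]
      change _ = crossEdge e.1
      cases crossEdge e.1 <;> rfl
  · rintro (rfl | rfl)
    · refine ⟨⟨⟨_, m1⟩, by simp⟩, ⟨⟨_, m2⟩, by simp⟩, fun u W _ => ?_⟩
      exact (nac_cycle_iff Prism _ crossEdge (fun e => rfl) W).2 (prism_closed W)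
    · refine ⟨⟨⟨_, m2⟩, by simp⟩, ⟨⟨_, m1⟩, by simp⟩, fun u W _ => ?_⟩
      refine (nac_cycle_iff Prism _ (fun e => !crossEdge e) (fun e => rfl) W).2 ?_
      have := prism_closed W
      simp only [Bool.not_eq_true', Bool.not_eq_false', Bool.not_not]
      tauto
end

section
/- The graph Q₁ has exactly 24 NAC-colorings (equivalently, exactly 12 NAC-colorings up to conjugation). -/
/-- The graph `Q₁`, with vertices `0,…,6` standing for `1,…,7`. -/
def Q1 : SimpleGraph (Fin 7) :=
  SimpleGraph.fromEdgeSet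
    {s(0, 2), s(0, 3), s(0, 4), s(1, 2), s(1, 3), s(1, 5),
     s(2, 6), s(3, 6), s(4, 5), s(4, 6), s(5, 6)}

/-- Extension of an edge coloring to all unordered pairs. -/
noncomputable def extCol {V : Type*} (G : SimpleGraph V) (δ : G.edgeSet → Bool) (e : Sym2 V) : Bool :=
  open Classical in if h : e ∈ G.edgeSet then δ ⟨e, h⟩ else false

theorem extCol_mem {V : Type*} (G : SimpleGraph V) (δ : G.edgeSet → Bool) (e : Sym2 V)
    (h : e ∈ G.edgeSet) : extCol G δ e = δ ⟨e, h⟩ := by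
  simp [extCol, h]

/-- The cycle condition on the list of colors of the edges of a cycle. -/
def okL (l : List Bool) : Bool :=
  l.all id || l.all not || (decide (2 ≤ l.countP id) && decide (2 ≤ l.countP not))

theorem cond_iff {V : Type*} (G : SimpleGraph V) (δ : G.edgeSet → Bool) {u : V} (W : G.Walk u u) :
    ((∀ e : G.edgeSet, (e : Sym2 V) ∈ W.edges → δ e = true) ∨
    (∀ e : G.edgeSet, (e : Sym2 V) ∈ W.edges → δ e = false) ∨
    (2 ≤ (W.edges.attach.filter
        (fun e => δ ⟨e.1, W.edges_subset_edgeSet e.2⟩)).length ∧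
     2 ≤ (W.edges.attach.filter
        (fun e => !(δ ⟨e.1, W.edges_subset_edgeSet e.2⟩))).length)) ↔
    okL (W.edges.map (extCol G δ)) = true := by
  have h1 : (W.edges.attach.filter
        (fun e => δ ⟨e.1, W.edges_subset_edgeSet e.2⟩)).length
        = (W.edges.map (extCol G δ)).countP id := by
    rw [← List.countP_eq_length_filter, List.countP_map,
      ← List.countP_attach (l := W.edges)]
    congr 1
    funext e
    simp [extCol_mem G δ e.1 (W.edges_subset_edgeSet e.2)]
  have h2 : (W.edges.attach.filter
        (fun e => !(δ ⟨e.1, W.edges_subset_edgeSet e.2⟩))).length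
        = (W.edges.map (extCol G δ)).countP not := by
    rw [← List.countP_eq_length_filter, List.countP_map,
      ← List.countP_attach (l := W.edges)]
    congr 1
    funext e
    simp [extCol_mem G δ e.1 (W.edges_subset_edgeSet e.2)]
  have h3 : ∀ b, (∀ e : G.edgeSet, (e : Sym2 V) ∈ W.edges → δ e = b) ↔
      ∀ e ∈ W.edges, extCol G δ e = b := by
    intro b
    constructor
    · intro h e he
      rw [extCol_mem G δ e (W.edges_subset_edgeSet he)]
      exact h _ he
    · intro h e he
      rw [← h e he, extCol_mem G δ e e.2]
  rw [h1, h2, h3, h3]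
  simp [okL, or_assoc]

/-- Along a walk, a labelling constant exactly on non-`D` edges. -/
theorem walk_label {V : Type*} (G : SimpleGraph V) (D : Sym2 V → Bool) (f : V → ℕ)
    (h : ∀ a b, G.Adj a b → (D s(a, b) = true ↔ f a ≠ f b)) {u v : V} (W : G.Walk u v) :
    (W.edges.countP D = 0 → f u = f v) ∧ (W.edges.countP D = 1 → f u ≠ f v) := by
  induction W with
  | nil => simp
  | @cons a b c hab p ih =>
    have := h a b hab
    rw [SimpleGraph.Walk.edges_cons, List.countP_cons]
    by_cases hD : D s(a, b) = true
    · rw [if_pos hD]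
      refine ⟨by omega, fun hh => ?_⟩
      rw [← ih.1 (by omega)]
      exact this.1 hD
    · rw [if_neg hD]
      have hf : f a = f b := by
        by_contra hne
        exact hD (this.2 hne)
      rw [hf]
      simpa using ih

theorem okL_of_ne (l : List Bool) (h1 : l.countP id ≠ 1) (h2 : l.countP not ≠ 1) :
    okL l = true := by
  rcases Nat.eq_zero_or_pos (l.countP id) with h | h
  · rw [List.countP_eq_zero] at h
    simp only [okL, Bool.or_eq_true]
    exact Or.inl (Or.inr (by simpa using h))
  · rcases Nat.eq_zero_or_pos (l.countP not) with h' | h'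
    · rw [List.countP_eq_zero] at h'
      simp only [okL, Bool.or_eq_true]
      exact Or.inl (Or.inl (by simpa using h'))
    · simp only [okL, Bool.or_eq_true, Bool.and_eq_true, decide_eq_true_eq]
      exact Or.inr (by omega)

/-- The color of a pair determined by a vertex labelling: red iff the labels differ. -/
def labCol (l : List ℕ) : Sym2 (Fin 7) → Bool :=
  Sym2.lift ⟨fun a b => decide (l.getD a 0 ≠ l.getD b 0), fun a b => by simp [eq_comm]⟩

/-- The edges of `Q1` as a list. -/
def edgesQ : List (Sym2 (Fin 7)) :=
  [s(0, 2), s(0, 3), s(0, 4), s(1, 2), s(1, 3), s(1, 5),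
   s(2, 6), s(3, 6), s(4, 5), s(4, 6), s(5, 6)]

/-- Labels of the blue components and of the red components, for each NAC-coloring. -/
def certs : List (List ℕ × List ℕ) :=
  [([0, 1, 0, 0, 0, 0, 0], [0, 1, 1, 1, 4, 1, 6]),
   ([0, 1, 0, 0, 0, 5, 6], [0, 1, 1, 1, 1, 1, 1]),
   ([0, 0, 0, 0, 4, 5, 0], [0, 0, 2, 3, 0, 0, 0]),
   ([0, 0, 0, 0, 4, 4, 4], [0, 1, 2, 2, 0, 1, 2]),
   ([0, 1, 0, 0, 4, 1, 0], [0, 1, 1, 1, 0, 0, 0]),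
   ([0, 1, 0, 0, 1, 1, 1], [0, 1, 1, 1, 0, 5, 1]),
   ([0, 0, 0, 3, 0, 0, 0], [0, 0, 2, 0, 4, 5, 0]),
   ([0, 1, 0, 1, 0, 0, 0], [0, 1, 1, 0, 4, 1, 0]),
   ([0, 1, 0, 1, 0, 5, 1], [0, 1, 1, 0, 1, 1, 1]),
   ([0, 0, 0, 3, 4, 5, 0], [0, 0, 2, 0, 0, 0, 0]),
   ([0, 1, 0, 1, 4, 1, 0], [0, 1, 1, 0, 0, 0, 0]),
   ([0, 1, 0, 1, 1, 1, 1], [0, 1, 1, 0, 0, 5, 1]),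
   ([0, 1, 1, 0, 0, 5, 1], [0, 1, 0, 1, 1, 1, 1]),
   ([0, 1, 1, 0, 0, 0, 0], [0, 1, 0, 1, 4, 1, 0]),
   ([0, 0, 2, 0, 0, 0, 0], [0, 0, 0, 3, 4, 5, 0]),
   ([0, 1, 1, 0, 1, 1, 1], [0, 1, 0, 1, 0, 5, 1]),
   ([0, 1, 1, 0, 4, 1, 0], [0, 1, 0, 1, 0, 0, 0]),
   ([0, 0, 2, 0, 4, 5, 0], [0, 0, 0, 3, 0, 0, 0]),
   ([0, 1, 1, 1, 0, 5, 1], [0, 1, 0, 0, 1, 1, 1]),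
   ([0, 1, 1, 1, 0, 0, 0], [0, 1, 0, 0, 4, 1, 0]),
   ([0, 1, 2, 2, 0, 1, 2], [0, 0, 0, 0, 4, 4, 4]),
   ([0, 0, 2, 3, 0, 0, 0], [0, 0, 0, 0, 4, 5, 0]),
   ([0, 1, 1, 1, 1, 1, 1], [0, 1, 0, 0, 0, 5, 6]),
   ([0, 1, 1, 1, 4, 1, 6], [0, 1, 0, 0, 0, 0, 0])]

theorem mem_edgeSet_Q1 (e : Sym2 (Fin 7)) : e ∈ Q1.edgeSet ↔ e ∈ edgesQ := by
  simp only [Q1, SimpleGraph.edgeSet_fromEdgeSet, edgesQ, List.mem_cons, List.not_mem_nil,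
    Set.mem_sdiff, Set.mem_insert_iff, Set.mem_singleton_iff, or_false]
  constructor
  · exact fun h => h.1
  · intro h
    refine ⟨h, ?_⟩
    rcases h with h | h | h | h | h | h | h | h | h | h | h <;> subst h <;> simp

/-- The colors of the eleven edges. -/
noncomputable def enc (δ : Q1.edgeSet → Bool) : List Bool := edgesQ.map (extCol Q1 δ)

theorem enc_injective : Function.Injective enc := by
  intro δ ε h
  funext e
  have := List.map_inj_left.1 h e.1 ((mem_edgeSet_Q1 e.1).1 e.2)
  rwa [extCol_mem _ _ _ e.2, extCol_mem _ _ _ e.2] at this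

theorem certs_ok : ∀ c ∈ certs, (∀ e ∈ edgesQ, labCol c.2 e = !labCol c.1 e) ∧
    (∃ e ∈ edgesQ, labCol c.1 e = true) ∧ (∃ e ∈ edgesQ, labCol c.1 e = false) := by
  decide +kernel

theorem nac_of_cert (c : List ℕ × List ℕ) (hc : c ∈ certs) :
    IsNACColoring Q1 (fun e => labCol c.1 e.1) := by
  obtain ⟨h1, ⟨e, he, h2⟩, ⟨e', he', h3⟩⟩ := certs_ok c hc
  refine ⟨⟨⟨e, (mem_edgeSet_Q1 e).2 he⟩, h2⟩, ⟨⟨e', (mem_edgeSet_Q1 e').2 he'⟩, h3⟩, ?_⟩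
  intro u W _
  rw [cond_iff]
  have hm : W.edges.map (extCol Q1 (fun e => labCol c.1 e.1)) = W.edges.map (labCol c.1) := by
    apply List.map_congr_left
    intro e he
    rw [extCol_mem _ _ _ (W.edges_subset_edgeSet he)]
  rw [hm]
  apply okL_of_ne
  · intro h
    rw [List.countP_map] at h
    exact (walk_label Q1 (labCol c.1) (fun a => c.1.getD a 0)
      (fun a b _ => by simp [labCol]) W).2 h rfl
  · intro h
    rw [List.countP_map] at h
    have hcount : W.edges.countP (labCol c.2) = 1 := by
      rw [← h]
      apply List.countP_congr
      intro e he
      rw [h1 e ((mem_edgeSet_Q1 e).1 (W.edges_subset_edgeSet he))]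
      simp
    exact (walk_label Q1 (labCol c.2) (fun a => c.2.getD a 0)
      (fun a b _ => by simp [labCol]) W).2 hcount rfl

/-- The 24 color lists. -/
def cols : List (List Bool) := certs.map (fun c => edgesQ.map (labCol c.1))

theorem adjQ (a b : Fin 7) (h : s(a, b) ∈ edgesQ) : Q1.Adj a b := (mem_edgeSet_Q1 s(a, b)).2 h

theorem finite_check : ∀ x0 x1 x2 x3 x4 x5 x6 x7 x8 x9 x10 : Bool,
    okL [x8, x10, x9] = true →
    okL [x0, x3, x4, x1] = true →
    okL [x0, x6, x7, x1] = true →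
    okL [x0, x6, x9, x2] = true →
    okL [x3, x6, x10, x5] = true →
    okL [x0, x3, x5, x8, x2] = true →
    okL [x1, x4, x5, x8, x2] = true →
    [x0, x1, x2, x3, x4, x5, x6, x7, x8, x9, x10].any id = true →
    [x0, x1, x2, x3, x4, x5, x6, x7, x8, x9, x10].any not = true →
    [x0, x1, x2, x3, x4, x5, x6, x7, x8, x9, x10] ∈ cols := by
  decide +kernel

theorem enc_mem_cols (δ : Q1.edgeSet → Bool) (h : IsNACColoring Q1 δ) : enc δ ∈ cols := by
  obtain ⟨⟨e, he⟩, ⟨e', he'⟩, hW⟩ := h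
  have hsw : ∀ a b : Fin 7, extCol Q1 δ s(a, b) = extCol Q1 δ s(b, a) := fun a b => by
    rw [Sym2.eq_swap]
  have c0 := (cond_iff Q1 δ _).1 (hW (u := 4) (.cons (adjQ 4 5 (by decide)) (.cons (adjQ 5 6 (by decide)) (.cons (adjQ 6 4 (by decide)) (.nil))))
    (by simp [SimpleGraph.Walk.isCycle_def, SimpleGraph.Walk.isTrail_def]))
  have c1 := (cond_iff Q1 δ _).1 (hW (u := 0) (.cons (adjQ 0 2 (by decide)) (.cons (adjQ 2 1 (by decide)) (.cons (adjQ 1 3 (by decide)) (.cons (adjQ 3 0 (by decide)) (.nil)))))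
    (by simp [SimpleGraph.Walk.isCycle_def, SimpleGraph.Walk.isTrail_def]))
  have c2 := (cond_iff Q1 δ _).1 (hW (u := 0) (.cons (adjQ 0 2 (by decide)) (.cons (adjQ 2 6 (by decide)) (.cons (adjQ 6 3 (by decide)) (.cons (adjQ 3 0 (by decide)) (.nil)))))
    (by simp [SimpleGraph.Walk.isCycle_def, SimpleGraph.Walk.isTrail_def]))
  have c3 := (cond_iff Q1 δ _).1 (hW (u := 0) (.cons (adjQ 0 2 (by decide)) (.cons (adjQ 2 6 (by decide)) (.cons (adjQ 6 4 (by decide)) (.cons (adjQ 4 0 (by decide)) (.nil)))))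
    (by simp [SimpleGraph.Walk.isCycle_def, SimpleGraph.Walk.isTrail_def]))
  have c4 := (cond_iff Q1 δ _).1 (hW (u := 1) (.cons (adjQ 1 2 (by decide)) (.cons (adjQ 2 6 (by decide)) (.cons (adjQ 6 5 (by decide)) (.cons (adjQ 5 1 (by decide)) (.nil)))))
    (by simp [SimpleGraph.Walk.isCycle_def, SimpleGraph.Walk.isTrail_def]))
  have c5 := (cond_iff Q1 δ _).1 (hW (u := 0) (.cons (adjQ 0 2 (by decide)) (.cons (adjQ 2 1 (by decide)) (.cons (adjQ 1 5 (by decide)) (.cons (adjQ 5 4 (by decide)) (.cons (adjQ 4 0 (by decide)) (.nil))))))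
    (by simp [SimpleGraph.Walk.isCycle_def, SimpleGraph.Walk.isTrail_def]))
  have c6 := (cond_iff Q1 δ _).1 (hW (u := 0) (.cons (adjQ 0 3 (by decide)) (.cons (adjQ 3 1 (by decide)) (.cons (adjQ 1 5 (by decide)) (.cons (adjQ 5 4 (by decide)) (.cons (adjQ 4 0 (by decide)) (.nil))))))
    (by simp [SimpleGraph.Walk.isCycle_def, SimpleGraph.Walk.isTrail_def]))
  simp only [SimpleGraph.Walk.edges_cons, SimpleGraph.Walk.edges_nil, List.map_cons, List.map_nil]
    at c0 c1 c2 c3 c4 c5 c6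
  rw [hsw 6 4] at c0
  rw [hsw 2 1, hsw 3 0] at c1
  rw [hsw 6 3, hsw 3 0] at c2
  rw [hsw 6 4, hsw 4 0] at c3
  rw [hsw 6 5, hsw 5 1] at c4
  rw [hsw 2 1, hsw 5 4, hsw 4 0] at c5
  rw [hsw 3 1, hsw 5 4, hsw 4 0] at c6
  refine finite_check _ _ _ _ _ _ _ _ _ _ _ c0 c1 c2 c3 c4 c5 c6 ?_ ?_
  · have : (edgesQ.map (extCol Q1 δ)).any id = true := by
      rw [List.any_map, List.any_eq_true]
      exact ⟨e.1, (mem_edgeSet_Q1 _).1 e.2, by simpa [extCol_mem _ _ _ e.2] using he⟩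
    exact this
  · have : (edgesQ.map (extCol Q1 δ)).any not = true := by
      rw [List.any_map, List.any_eq_true]
      exact ⟨e'.1, (mem_edgeSet_Q1 _).1 e'.2, by simpa [extCol_mem _ _ _ e'.2] using he'⟩
    exact this

/-- The graph `Q₁` has exactly 24 NAC-colorings (12 up to conjugation). -/
theorem Q1_NAC_count :
    {δ : Q1.edgeSet → Bool | IsNACColoring Q1 δ}.ncard = 24 := by
  rw [← Set.ncard_image_of_injective _ enc_injective]
  have : enc '' {δ : Q1.edgeSet → Bool | IsNACColoring Q1 δ} = (cols.toFinset : Set (List Bool)) := by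
    ext l
    simp only [Set.mem_image, Set.mem_ofPred_eq, List.coe_toFinset]
    constructor
    · rintro ⟨δ, hδ, rfl⟩
      exact enc_mem_cols δ hδ
    · intro hl
      obtain ⟨c, hc, rfl⟩ := List.mem_map.1 hl
      refine ⟨_, nac_of_cert c hc, ?_⟩
      apply List.map_congr_left
      intro e he
      rw [extCol_mem _ _ _ ((mem_edgeSet_Q1 e).2 he)]
  rw [this, Set.ncard_coe_finset]
  decide +kernel
end
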